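/- Let d ≥ 1, γ ≥ 0 and c ≥ 0. For a strictly increasing tuple x : Fin d → ℝ define the β-Dyson drift b(x) i = −γ · x i + c · ∑_{j ≠ i} 1/(x i − x j). Then for any two strictly increasing tuples x, y : Fin d → ℝ one has the one-sided Lipschitz (contraction) estimate ∑_{i} (x i − y i) · (b(x) i − b(y) i) ≤ −γ · ∑_{i} (x i − y i)². -/

import Mathlib

/-!
The linear part of the drift contributes exactly `-γ ∑ (x i - y i)²`, so it suffices that the
repulsion part contributes a nonpositive amount. Symmetrizing its double sum over `i ↔ j`, the pair
`(i, j)` contributes `(u - v) * (1 / u - 1 / v)` with `u = x i - x j` and `v = y i - y j`. These have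
the same sign since `x` and `y` are ordered alike, and `t ↦ 1 / t` is decreasing on each half-line.
-/

open Finset

/-- Antitonicity of `t ↦ 1 / t` on each half-line; the case `u = v = 0` holds trivially. -/
lemma sub_mul_one_div_sub_nonpos {u v : ℝ} (h : 0 < u * v ∨ u = v) :
    (u - v) * (1 / u - 1 / v) ≤ 0 := by
  rcases h with h | rfl
  · have hu : u ≠ 0 := left_ne_zero_of_mul h.ne'
    have hv : v ≠ 0 := right_ne_zero_of_mul h.ne'
    have e : (u - v) * (1 / u - 1 / v) = -((u - v) ^ 2 / (u * v)) := by
      field_simp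
      ring
    rw [e]
    exact neg_nonpos.2 (by positivity)
  · simp

lemma sum_sub_mul_repulsion_nonpos {d : ℕ} {x y : Fin d → ℝ} (hx : StrictMono x)
    (hy : StrictMono y) :
    ∑ i, ∑ j, (x i - y i) * (1 / (x i - x j) - 1 / (y i - y j)) ≤ 0 := by
  have hcomm := Finset.sum_comm (s := univ) (t := univ)
    (f := fun i j : Fin d => (x i - y i) * (1 / (x i - x j) - 1 / (y i - y j)))
  have hpair : ∑ i, ∑ j, ((x i - y i) * (1 / (x i - x j) - 1 / (y i - y j)) +
      (x j - y j) * (1 / (x j - x i) - 1 / (y j - y i))) ≤ 0 := by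
    refine Finset.sum_nonpos fun i _ => Finset.sum_nonpos fun j _ => ?_
    have key : ((x i - x j) - (y i - y j)) * (1 / (x i - x j) - 1 / (y i - y j)) ≤ 0 := by
      apply sub_mul_one_div_sub_nonpos
      rcases lt_trichotomy i j with h | rfl | h
      · exact .inl (mul_pos_of_neg_of_neg (sub_neg.2 (hx h)) (sub_neg.2 (hy h)))
      · simp
      · exact .inl (mul_pos (sub_pos.2 (hx h)) (sub_pos.2 (hy h)))
    have e (z : Fin d → ℝ) : 1 / (z j - z i) = -(1 / (z i - z j)) := by
      rw [← neg_sub, one_div_neg_eq_neg_one_div]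
    rw [e x, e y]
    linarith
  simp only [Finset.sum_add_distrib] at hpair
  linarith

theorem dyson_drift_one_sided_lipschitz (d : ℕ) (hd : 1 ≤ d) (γ c : ℝ)
    (hγ : 0 ≤ γ) (hc : 0 ≤ c)
    (b : (Fin d → ℝ) → Fin d → ℝ)
    (hb : ∀ z : Fin d → ℝ, ∀ i : Fin d,
      b z i = -γ * z i + c * ∑ j ∈ Finset.univ.erase i, 1 / (z i - z j))
    (x y : Fin d → ℝ) (hx : StrictMono x) (hy : StrictMono y) :
    ∑ i : Fin d, (x i - y i) * (b x i - b y i) ≤ -γ * ∑ i : Fin d, (x i - y i) ^ 2 := by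
  -- The diagonal term is `1 / 0 = 0`, so the sum may be taken over all `j`.
  have hfull (z : Fin d → ℝ) (i : Fin d) :
      ∑ j ∈ Finset.univ.erase i, 1 / (z i - z j) = ∑ j, 1 / (z i - z j) :=
    Finset.sum_erase _ (by simp)
  have hsplit : ∑ i, (x i - y i) * (b x i - b y i) = -γ * ∑ i, (x i - y i) ^ 2 +
      c * ∑ i, ∑ j, (x i - y i) * (1 / (x i - x j) - 1 / (y i - y j)) := by
    rw [Finset.mul_sum, Finset.mul_sum, ← Finset.sum_add_distrib]
    refine Finset.sum_congr rfl fun i _ => ?_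
    rw [hb, hb, hfull, hfull, ← Finset.mul_sum, Finset.sum_sub_distrib]
    ring
  rw [hsplit]
  linarith [mul_nonpos_of_nonneg_of_nonpos hc (sum_sub_mul_repulsion_nonpos hx hy)]
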